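/- Fix an integer n ≥ 1. Let Ω₁ ∈ τ_s(ℍ_s^n) be real-path-connected, let Ω₂ ∈ τ_s(ℍ_s^n) be Ω₁-stem-preserving, and let f ∈ 𝒮ℛ(Ω₁) and g ∈ 𝒮ℛ(Ω₂). Then the *-product f*g : Ω₁ → ℍ is slice regular, i.e. f*g ∈ 𝒮ℛ(Ω₁). -/

import Mathlib

open scoped ENNReal NNReal

noncomputable section

/-- The real quaternions. -/
abbrev ℍ := Quaternion ℝ

/-- The set `𝕊` of imaginary units of the quaternions. -/
def QS : Set ℍ := {I | I ^ 2 = -1}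

/-- `Ψ_i^I : ℂ^n → ℂ_I^n ⊆ ℍ^n`, sending `x + y i` to `x + y I` componentwise. -/
def PsiI (n : ℕ) (I : ℍ) (z : Fin n → ℂ) : Fin n → ℍ :=
  fun ℓ => algebraMap ℝ ℍ (z ℓ).re + (z ℓ).im • I

/-- The slice `ℂ_I^n = (ℝ + ℝ I)^n ⊆ ℍ^n`. -/
def sliceCn (n : ℕ) (I : ℍ) : Set (Fin n → ℍ) := Set.range (PsiI n I)

/-- The weakly slice cone `ℍ_s^n = ⋃_{I ∈ 𝕊} ℂ_I^n`. -/
def weakSliceCone (n : ℕ) : Set (Fin n → ℍ) := ⋃ I ∈ QS, sliceCn n I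

/-- `Ω` is slice open (i.e. `Ω ∈ τ_s(ℍ_s^n)`): `Ω ⊆ ℍ_s^n` and each slice
`Ω_I = Ω ∩ ℂ_I^n` is open in `ℂ_I^n`, encoded via the homeomorphism `Ψ_i^I`. -/
def sliceOpen (n : ℕ) (Ω : Set (Fin n → ℍ)) : Prop :=
  Ω ⊆ weakSliceCone n ∧ ∀ I ∈ QS, IsOpen (PsiI n I ⁻¹' Ω)

/-- The set `𝒫(ℂ^n)` of continuous paths `[0,1] → ℂ^n` with real start point,
encoded as functions `ℝ → ℂ^n` continuous on `[0,1]`. -/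
def PathsC (n : ℕ) : Set (ℝ → Fin n → ℂ) :=
  {γ | ContinuousOn γ (Set.Icc 0 1) ∧ ∀ ℓ, (γ 0 ℓ).im = 0}

/-- `γ^I([0,1]) ⊆ Ω`. -/
def pathInSlice (n : ℕ) (Ω : Set (Fin n → ℍ)) (I : ℍ) (γ : ℝ → Fin n → ℂ) : Prop :=
  ∀ t ∈ Set.Icc (0 : ℝ) 1, PsiI n I (γ t) ∈ Ω

/-- The set `𝕊(Ω, γ) = {I ∈ 𝕊 : γ^I ⊆ Ω}`. -/
def sliceUnits (n : ℕ) (Ω : Set (Fin n → ℍ)) (γ : ℝ → Fin n → ℂ) : Set ℍ :=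
  {I | I ∈ QS ∧ pathInSlice n Ω I γ}

/-- The set `𝒫(ℂ^n, Ω)`. -/
def PathsIn (n : ℕ) (Ω : Set (Fin n → ℍ)) : Set (ℝ → Fin n → ℂ) :=
  {γ | γ ∈ PathsC n ∧ ∃ I, I ∈ sliceUnits n Ω γ}

/-- The straight segment `𝓛_z^w(t) = (1 - t)z + tw`. -/
def segPath (n : ℕ) (z w : Fin n → ℂ) : ℝ → Fin n → ℂ :=
  fun t => (1 - t) • z + t • w

/-- Concatenation of paths. -/
def concatP (n : ℕ) (γ δ : ℝ → Fin n → ℂ) : ℝ → Fin n → ℂ :=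
  fun t => if t ≤ 1 / 2 then γ (2 * t) else δ (2 * t - 1)

/-- `𝓛_γ(z) := γ ∘ 𝓛_{γ(1)}^z`, the extension of `γ` by the segment from `γ(1)` to `z`. -/
def extendPath (n : ℕ) (γ : ℝ → Fin n → ℂ) (z : Fin n → ℂ) : ℝ → Fin n → ℂ :=
  concatP n γ (segPath n (γ 1) z)

/-- The ball `B_{𝒫(ℂ^n)}(γ, r)` in path space. -/
def pathBall (n : ℕ) (γ : ℝ → Fin n → ℂ) (r : ℝ) : Set (ℝ → Fin n → ℂ) :=
  {β | ∃ z ∈ Metric.ball (γ 1) r, β = extendPath n γ z}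

/-- `B_I(c^I, r) ⊆ Ω_I`, encoded via `Ψ_i^I`. -/
def ballInSlice (n : ℕ) (Ω : Set (Fin n → ℍ)) (I : ℍ) (c : Fin n → ℂ) (r : ℝ) : Prop :=
  ∀ w ∈ Metric.ball c r, PsiI n I w ∈ Ω

/-- `r_{γ,Ω}`, as an extended nonnegative real. -/
def rPath (n : ℕ) (Ω : Set (Fin n → ℍ)) (γ : ℝ → Fin n → ℂ) : ℝ≥0∞ :=
  sSup {x : ℝ≥0∞ | ∃ r : ℝ≥0, x = r ∧ pathBall n γ r ⊆ PathsIn n Ω}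

/-- `r^{𝕊'}_{γ,Ω}`, as an extended nonnegative real. -/
def rSliceSet (n : ℕ) (Ω : Set (Fin n → ℍ)) (γ : ℝ → Fin n → ℂ) (S' : Set ℍ) : ℝ≥0∞ :=
  sSup {x : ℝ≥0∞ | ∃ r : ℝ≥0, x = r ∧ ∀ I ∈ S', ballInSlice n Ω I (γ 1) r}

/-- `r²_{γ,Ω}`, as an extended nonnegative real. -/
def r2Slice (n : ℕ) (Ω : Set (Fin n → ℍ)) (γ : ℝ → Fin n → ℂ) : ℝ≥0∞ :=
  sSup {x : ℝ≥0∞ | ∃ S'' : Set ℍ, S'' ⊆ sliceUnits n Ω γ ∧ S''.Nontrivial ∧ x = rSliceSet n Ω γ S''}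

/-- `r^I_{γ,Ω}`, as an extended nonnegative real. -/
def rISlice (n : ℕ) (Ω : Set (Fin n → ℍ)) (γ : ℝ → Fin n → ℂ) (I : ℍ) : ℝ≥0∞ :=
  sSup {x : ℝ≥0∞ | ∃ r : ℝ≥0, x = r ∧ ballInSlice n Ω I (γ 1) r}

/-- `Ω` is real-path-connected. -/
def realPathConnected (n : ℕ) (Ω : Set (Fin n → ℍ)) : Prop :=
  ∀ q ∈ Ω, ∃ γ ∈ PathsIn n Ω, ∃ I ∈ sliceUnits n Ω γ, PsiI n I (γ 1) = q

/-- `Ω₂` is `Ω₁`-stem-preserving. -/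
def stemPreserving (n : ℕ) (Ω₁ Ω₂ : Set (Fin n → ℍ)) : Prop :=
  (∀ γ ∈ PathsIn n Ω₁, (sliceUnits n Ω₂ γ).Nontrivial) ∧
  (∀ α ∈ PathsIn n Ω₁, ∀ β ∈ PathsIn n Ω₁, α 1 = β 1 →
    ¬ ∃ I, sliceUnits n Ω₂ α ∩ sliceUnits n Ω₂ β = {I})

/-- `F : 𝒫(ℂ^n, Ω) → ℍ^{2×1}` is a (path-slice) stem function of `f`:
`f(γ^I(1)) = (1, I)·F(γ)`. -/
def isStemOf (n : ℕ) (Ω : Set (Fin n → ℍ)) (f : (Fin n → ℍ) → ℍ)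
    (F : (ℝ → Fin n → ℂ) → ℍ × ℍ) : Prop :=
  ∀ γ ∈ PathsIn n Ω, ∀ I ∈ sliceUnits n Ω γ, f (PsiI n I (γ 1)) = (F γ).1 + I * (F γ).2

/-- `f` is a path-slice function on `Ω`. -/
def PathSliceFn (n : ℕ) (Ω : Set (Fin n → ℍ)) (f : (Fin n → ℍ) → ℍ) : Prop :=
  ∃ F, isStemOf n Ω f F

/-- `f` is (weakly) slice regular on `Ω`: each restriction `f_I` is real differentiable
and satisfies the Cauchy-Riemann equations `(∂/∂x_ℓ + I ∂/∂y_ℓ) f_I = 0`. -/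
def SliceRegular (n : ℕ) (Ω : Set (Fin n → ℍ)) (f : (Fin n → ℍ) → ℍ) : Prop :=
  ∀ I ∈ QS,
    DifferentiableOn ℝ (fun z => f (PsiI n I z)) (PsiI n I ⁻¹' Ω) ∧
    ∀ z ∈ PsiI n I ⁻¹' Ω, ∀ ℓ : Fin n,
      fderivWithin ℝ (fun z => f (PsiI n I z)) (PsiI n I ⁻¹' Ω) z (Pi.single ℓ 1)
        + I * fderivWithin ℝ (fun z => f (PsiI n I z)) (PsiI n I ⁻¹' Ω) z
            (Pi.single ℓ Complex.I) = 0

open Classical in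
/-- `F_{Ω₁}^f` : a choice of stem function of the path-slice function `f : Ω₂ → ℍ`
(its restriction to `𝒫(ℂ^n, Ω₁)` is independent of the choice). -/
def stemF (n : ℕ) (Ω₂ : Set (Fin n → ℍ)) (f : (Fin n → ℍ) → ℍ) :
    (ℝ → Fin n → ℂ) → ℍ × ℍ :=
  if h : ∃ F, isStemOf n Ω₂ f F then h.choose else fun _ => 0

open Classical in
/-- The map `ℑ : ℍ_s^n → 𝕊 ∪ {0}`. -/
def scrI {n : ℕ} (q : Fin n → ℍ) : ℍ :=
  if h : (Finset.univ.filter fun ℓ : Fin n => Quaternion.im (q ℓ) ≠ 0).Nonempty then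
    ‖Quaternion.im (q ((Finset.univ.filter
        fun ℓ : Fin n => Quaternion.im (q ℓ) ≠ 0).min' h))‖⁻¹ •
      Quaternion.im (q ((Finset.univ.filter
        fun ℓ : Fin n => Quaternion.im (q ℓ) ≠ 0).min' h))
  else 0

open Classical in
/-- The map `ℱ_{Ω₁}^g : Ω₁ → ℍ^{2×1}`. -/
def scrF (n : ℕ) (Ω₁ Ω₂ : Set (Fin n → ℍ)) (g : (Fin n → ℍ) → ℍ) (q : Fin n → ℍ) :
    ℍ × ℍ :=
  if h : (∃ ℓ, Quaternion.im (q ℓ) ≠ 0) ∧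
      ∃ γ, γ ∈ PathsIn n Ω₁ ∧ pathInSlice n Ω₁ (scrI q) γ ∧ PsiI n (scrI q) (γ 1) = q then
    stemF n Ω₂ g h.2.choose
  else (g q, 0)

/-- The `*`-product `(f*g)(q) = (f(q), ℑ(q)f(q))·ℱ_{Ω₁}^g(q)`. -/
def starProd (n : ℕ) (Ω₁ Ω₂ : Set (Fin n → ℍ)) (f g : (Fin n → ℍ) → ℍ) :
    (Fin n → ℍ) → ℍ :=
  fun q => f q * (scrF n Ω₁ Ω₂ g q).1 + scrI q * f q * (scrF n Ω₁ Ω₂ g q).2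

/-- Componentwise complex conjugate of a path. -/
def conjPath (n : ℕ) (γ : ℝ → Fin n → ℂ) : ℝ → Fin n → ℂ :=
  fun t ℓ => starRingEnd ℂ (γ t ℓ)

end

theorem QS_mul {I : ℍ} (h : I ∈ QS) : I * I = -1 := by
  have : I ^ 2 = -1 := h
  rwa [pow_two] at this

theorem QS_neg {I : ℍ} (h : I ∈ QS) : -I ∈ QS := by
  have := QS_mul h
  simp [QS, pow_two, this]

theorem QS_norm {I : ℍ} (h : I ∈ QS) : ‖I‖ = 1 := by
  have h1 := congrArg norm (QS_mul h)
  rw [norm_mul, norm_neg, norm_one] at h1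
  nlinarith [norm_nonneg I]

theorem QS_re {I : ℍ} (h : I ∈ QS) : I.re = 0 := by
  have h1 := QS_mul h
  have a := congrArg (fun q : ℍ => q.re) h1
  have b := congrArg (fun q : ℍ => q.imI) h1
  have c := congrArg (fun q : ℍ => q.imJ) h1
  have d := congrArg (fun q : ℍ => q.imK) h1
  have e1 : QuaternionAlgebra.re (1 : ℍ) = 1 := rfl
  have e2 : QuaternionAlgebra.imI (1 : ℍ) = 0 := rfl
  have e3 : QuaternionAlgebra.imJ (1 : ℍ) = 0 := rfl
  have e4 : QuaternionAlgebra.imK (1 : ℍ) = 0 := rfl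
  simp at a b c d
  rw [e1] at a
  rw [e2] at b
  rw [e3] at c
  rw [e4] at d
  by_contra hne
  have b' : I.imI = 0 := by
    have : I.re * I.imI = 0 := by nlinarith
    simpa [hne] using this
  have c' : I.imJ = 0 := by
    have : I.re * I.imJ = 0 := by nlinarith
    simpa [hne] using this
  have d' : I.imK = 0 := by
    have : I.re * I.imK = 0 := by nlinarith
    simpa [hne] using this
  rw [b', c', d'] at a
  nlinarith [sq_nonneg I.re]

theorem norm_lift {K : ℍ} (hK : K ∈ QS) (c : ℂ) :
    ‖(Complex.lift ⟨K, QS_mul hK⟩ : ℂ →ₐ[ℝ] ℍ) c‖ = ‖c‖ := by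
  have h1 : (Complex.lift ⟨K, QS_mul hK⟩ : ℂ →ₐ[ℝ] ℍ) c = algebraMap ℝ ℍ c.re + c.im • K := by
    simp [Complex.lift]
  have hr := QS_re hK
  have hn := QS_norm hK
  have h2 : K.imI ^ 2 + K.imJ ^ 2 + K.imK ^ 2 = 1 := by
    have := Quaternion.normSq_eq_norm_mul_self K
    rw [Quaternion.normSq_def', hn, hr] at this
    linarith
  rw [← sq_eq_sq₀ (norm_nonneg _) (norm_nonneg _), h1, pow_two, ← Quaternion.normSq_eq_norm_mul_self,
    Quaternion.normSq_def', Complex.sq_norm, Complex.normSq_apply]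
  simp [hr]
  linear_combination c.im ^ 2 * h2

/-- One-variable identity theorem for functions holomorphic with respect to left
multiplication by `K`. -/
theorem ident1 {K : ℍ} (hK : K ∈ QS) (D : Set ℂ) (hD : IsOpen D) (hc : Convex ℝ D)
    (φ : ℂ → ℍ)
    (hφ : ∀ t ∈ D, ∃ L : ℂ →L[ℝ] ℍ, HasFDerivAt φ L t ∧ ∀ v, L (Complex.I * v) = K * L v)
    (t0 : ℂ) (ht0 : t0 ∈ D) (hfr : ∃ᶠ t in nhdsWithin t0 {t0}ᶜ, φ t = 0) :
    ∀ t ∈ D, φ t = 0 := by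
  let θ : ℂ →ₐ[ℝ] ℍ := Complex.lift ⟨K, QS_mul hK⟩
  have hθ : ∀ c, θ c = algebraMap ℝ ℍ c.re + c.im • K := by intro c; simp [θ]
  let _ : Module ℂ ℍ := Module.compHom ℍ (θ : ℂ →+* ℍ)
  have hsm : ∀ (c : ℂ) (q : ℍ), c • q = θ c * q := fun c q => rfl
  let _ : NormedSpace ℂ ℍ := ⟨fun c q => by rw [hsm, norm_mul, norm_lift hK]⟩
  have hd : DifferentiableOn ℂ φ D := by
    intro t ht
    obtain ⟨L, hL, hLI⟩ := hφ t ht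
    have hLs : ∀ (c v : ℂ), L (c * v) = c • L v := by
      intro c v
      have e : c * v = c.re • v + c.im • (Complex.I * v) := by
        rw [Complex.real_smul, Complex.real_smul]
        linear_combination (-v) * Complex.re_add_im c
      rw [e, map_add, map_smul, map_smul, hLI, hsm, hθ, add_mul]
      simp [Algebra.smul_def, mul_assoc]
    let L' : ℂ →L[ℂ] ℍ :=
      { toFun := L
        map_add' := L.map_add
        map_smul' := fun c v => hLs c v
        cont := L.continuous }
    have : HasFDerivAt φ L' t := by
      rw [hasFDerivAt_iff_isLittleO] at hL ⊢
      exact hL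
    exact this.differentiableAt.differentiableWithinAt
  exact (hd.analyticOnNhd hD).eqOn_zero_of_preconnected_of_frequently_eq_zero
    hc.isPreconnected ht0 hfr

/-- `h` is differentiable at `z` with derivative complex linear w.r.t. left mult by `K`. -/
def HolAt (n : ℕ) (K : ℍ) (h : (Fin n → ℂ) → ℍ) (z : Fin n → ℂ) : Prop :=
  ∃ L : (Fin n → ℂ) →L[ℝ] ℍ, HasFDerivAt h L z ∧ ∀ v, L (Complex.I • v) = K * L v

theorem HolAt.line {n : ℕ} {K : ℍ} {h : (Fin n → ℂ) → ℍ} (a b : Fin n → ℂ) (t : ℂ)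
    (H : HolAt n K h (a + t • b)) :
    ∃ L : ℂ →L[ℝ] ℍ, HasFDerivAt (fun t : ℂ => h (a + t • b)) L t ∧
      ∀ v, L (Complex.I * v) = K * L v := by
  obtain ⟨L, hL, hI⟩ := H
  let B : ℂ →L[ℝ] (Fin n → ℂ) := ((ContinuousLinearMap.id ℂ ℂ).smulRight b).restrictScalars ℝ
  have hB : HasFDerivAt (fun t : ℂ => a + t • b) B t := by
    have : HasFDerivAt (fun t : ℂ => B t) B t := B.hasFDerivAt
    exact this.const_add a
  refine ⟨L.comp B, hL.comp t hB, fun v => ?_⟩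
  have : B (Complex.I * v) = Complex.I • B v := by
    simp [B, mul_smul]
  simp only [ContinuousLinearMap.comp_apply, this, hI]

theorem line_open {n : ℕ} (a b c : Fin n → ℂ) (r : ℝ) :
    IsOpen ((fun t : ℂ => a + t • b) ⁻¹' Metric.ball c r) :=
  Metric.isOpen_ball.preimage (by fun_prop)

theorem line_convex {n : ℕ} (a b c : Fin n → ℂ) (r : ℝ) :
    Convex ℝ ((fun t : ℂ => a + t • b) ⁻¹' Metric.ball c r) := by
  intro s hs t ht x y hx hy hxy
  have := convex_ball c r hs ht hx hy hxy
  have e : x • (a + s • b) + y • (a + t • b) = a + (x • s + y • t) • b := by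
    have : a = (x + y) • a := by rw [hxy, one_smul]
    conv_rhs => rw [this]
    simp only [smul_add, add_smul, smul_assoc]
    abel
  simp only at this
  rw [e] at this
  exact this

/-- A holomorphic function on a ball vanishing near one point vanishes. -/
theorem ident_ball {n : ℕ} {K : ℍ} (hK : K ∈ QS) (h : (Fin n → ℂ) → ℍ) (c : Fin n → ℂ) (r : ℝ)
    (hh : ∀ z ∈ Metric.ball c r, HolAt n K h z) (w : Fin n → ℂ) (hw : w ∈ Metric.ball c r)
    (h0 : ∀ᶠ z in nhds w, h z = 0) : ∀ u ∈ Metric.ball c r, h u = 0 := by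
  intro u hu
  have key := ident1 hK _ (line_open w (u - w) c r) (line_convex w (u - w) c r)
    (fun t => h (w + t • (u - w))) (fun t ht => HolAt.line _ _ _ (hh _ ht)) 0 (by simpa using hw) ?_
    1 (by simpa using hu)
  · simpa using key
  · have : Filter.Tendsto (fun t : ℂ => w + t • (u - w)) (nhds 0) (nhds w) := by
      have : Continuous (fun t : ℂ => w + t • (u - w)) := by fun_prop
      simpa using this.tendsto 0
    exact ((this.eventually h0).filter_mono nhdsWithin_le_nhds).frequently

theorem ident_real {n : ℕ} {K : ℍ} (hK : K ∈ QS) (h : (Fin n → ℂ) → ℍ) (c : Fin n → ℂ) (r : ℝ)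
    (hc : ∀ l, (c l).im = 0)
    (hh : ∀ z ∈ Metric.ball c r, HolAt n K h z)
    (h0 : ∀ z ∈ Metric.ball c r, (∀ l, (z l).im = 0) → h z = 0) :
    ∀ u ∈ Metric.ball c r, h u = 0 := by
  intro u hu
  let x : Fin n → ℂ := fun l => ((u l).re : ℂ)
  let y : Fin n → ℂ := fun l => ((u l).im : ℂ)
  have hu' : u = x + Complex.I • y := by
    ext l
    simp only [x, y, Pi.add_apply, Pi.smul_apply, smul_eq_mul]
    rw [mul_comm, Complex.re_add_im]
  have hx : x ∈ Metric.ball c r := by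
    rw [Metric.mem_ball] at hu ⊢
    refine lt_of_le_of_lt ?_ hu
    rw [dist_pi_le_iff dist_nonneg]
    intro l
    refine le_trans ?_ (dist_le_pi_dist u c l)
    have e : x l - c l = (((u l - c l).re : ℝ) : ℂ) := by
      apply Complex.ext <;> simp [x, hc]
    rw [dist_eq_norm, dist_eq_norm, e, Complex.norm_real]
    exact Complex.abs_re_le_norm _
  have hopen := line_open x y c r
  have hmem : (0 : ℂ) ∈ ((fun t : ℂ => x + t • y) ⁻¹' Metric.ball c r) := by simpa using hx
  have key := ident1 hK _ hopen (line_convex x y c r)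
    (fun t => h (x + t • y)) (fun t ht => HolAt.line _ _ _ (hh _ ht)) 0 hmem ?_
    Complex.I (by rw [Set.mem_preimage, ← hu']; exact hu)
  · rw [hu']; exact key
  · have h1 : Filter.Tendsto (fun s : ℝ => (s : ℂ)) (nhdsWithin 0 {0}ᶜ) (nhdsWithin 0 {0}ᶜ) := by
      refine tendsto_nhdsWithin_iff.2 ⟨?_, ?_⟩
      · exact ((Complex.continuous_ofReal.tendsto 0).mono_left nhdsWithin_le_nhds)
      · filter_upwards [self_mem_nhdsWithin] with s hs
        simpa using hs
    refine h1.frequently (Filter.Eventually.frequently ?_)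
    have h2 := (h1.mono_right nhdsWithin_le_nhds).eventually (hopen.mem_nhds hmem)
    filter_upwards [h2] with s hs
    refine h0 _ hs fun l => ?_
    simp [x, y]

/-- Identity theorem along a path starting at a real point. -/
theorem ident_path {n : ℕ} {K : ℍ} (hK : K ∈ QS) (h : (Fin n → ℂ) → ℍ) (U : Set (Fin n → ℂ))
    (hU : IsOpen U) (hh : ∀ z ∈ U, HolAt n K h z)
    (h0 : ∀ z ∈ U, (∀ l, (z l).im = 0) → h z = 0)
    (γ : ℝ → Fin n → ℂ) (hγ : γ ∈ PathsC n) (hγU : ∀ t ∈ Set.Icc (0 : ℝ) 1, γ t ∈ U) :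
    h (γ 1) = 0 := by
  let A : Set (Fin n → ℂ) := {z | ∀ᶠ w in nhds z, h w = 0}
  let V : Set (Fin n → ℂ) := U \ A
  have hA : IsOpen A := isOpen_setOfPred_eventually_nhds
  have hV : IsOpen V := by
    rw [Metric.isOpen_iff]
    rintro z ⟨hz, hzA⟩
    obtain ⟨r, hr, hb⟩ := Metric.isOpen_iff.1 hU z hz
    refine ⟨r, hr, fun w hw => ⟨hb hw, fun hwA => hzA ?_⟩⟩
    have := ident_ball hK h z r (fun z hz => hh z (hb hz)) w hw hwA
    exact Filter.mem_of_superset (Metric.ball_mem_nhds z hr) this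
  have hpre : IsPreconnected (γ '' Set.Icc (0 : ℝ) 1) := isPreconnected_Icc.image γ hγ.1
  by_contra hne
  have h01 : (0 : ℝ) ∈ Set.Icc (0 : ℝ) 1 := by simp
  have h11 : (1 : ℝ) ∈ Set.Icc (0 : ℝ) 1 := by simp
  have hA0 : γ 0 ∈ A := by
    obtain ⟨r, hr, hb⟩ := Metric.isOpen_iff.1 hU _ (hγU 0 h01)
    have := ident_real hK h (γ 0) r hγ.2 (fun z hz => hh z (hb hz)) (fun z hz => h0 z (hb hz))
    exact Filter.mem_of_superset (Metric.ball_mem_nhds _ hr) this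
  have hV1 : γ 1 ∈ V := ⟨hγU 1 h11, fun hA1 => hne (mem_of_mem_nhds (s := {w | h w = 0}) hA1)⟩
  obtain ⟨z, -, hzA, hzV⟩ := hpre A V hA hV
    (by
      rintro _ ⟨t, ht, rfl⟩
      by_cases hc : γ t ∈ A
      · exact Or.inl hc
      · exact Or.inr ⟨hγU t ht, hc⟩)
    ⟨γ 0, ⟨0, h01, rfl⟩, hA0⟩ ⟨γ 1, ⟨1, h11, rfl⟩, hV1⟩
  exact hzV.2 hzA

theorem sliceRegular_holAt {n : ℕ} {Ω : Set (Fin n → ℍ)} (hΩ : sliceOpen n Ω)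
    {f : (Fin n → ℍ) → ℍ} (hf : SliceRegular n Ω f) {I : ℍ} (hI : I ∈ QS) {z : Fin n → ℂ}
    (hz : PsiI n I z ∈ Ω) : HolAt n I (fun z => f (PsiI n I z)) z := by
  obtain ⟨hd, hcr⟩ := hf I hI
  have hop := hΩ.2 I hI
  have hzm : z ∈ PsiI n I ⁻¹' Ω := hz
  have hcr := hcr z hzm
  rw [fderivWithin_of_isOpen hop hzm] at hcr
  have hda := (hd z hzm).differentiableAt (hop.mem_nhds hzm)
  refine ⟨_, hda.hasFDerivAt, ?_⟩
  generalize fderiv ℝ (fun z => f (PsiI n I z)) z = L at hcr ⊢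
  have h1 : ∀ l, L (Pi.single l Complex.I) = I * L (Pi.single l 1) := by
    intro l
    have := congrArg (fun q => I * q) (hcr l)
    simp only [mul_add, ← mul_assoc, QS_mul hI, mul_zero] at this
    have e : I * L (Pi.single l 1) + -1 * L (Pi.single l Complex.I) = 0 := this
    rw [neg_one_mul, add_neg_eq_zero] at e
    exact e.symm
  have h2 : ∀ l (c : ℂ), L (Pi.single l c) = c.re • L (Pi.single l 1) + c.im • (I * L (Pi.single l 1)) := by
    intro l c
    rw [← h1, ← map_smul, ← map_smul, ← map_add]
    congr 1
    ext j
    rcases eq_or_ne j l with rfl | hj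
    · simp
    · simp [hj]
  intro v
  rw [← Finset.univ_sum_single (Complex.I • v)]
  conv_rhs => rw [← Finset.univ_sum_single v]
  rw [map_sum, map_sum, Finset.mul_sum]
  refine Finset.sum_congr rfl fun l _ => ?_
  rw [h2, h2 l (v l)]
  have := QS_mul hI
  simp [mul_add, ← mul_assoc, this]
  abel

theorem sliceRegular_of_holAt {n : ℕ} {Ω : Set (Fin n → ℍ)} (hΩ : sliceOpen n Ω)
    {f : (Fin n → ℍ) → ℍ}
    (hf : ∀ I ∈ QS, ∀ z, PsiI n I z ∈ Ω → HolAt n I (fun z => f (PsiI n I z)) z) :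
    SliceRegular n Ω f := by
  intro I hI
  have hop := hΩ.2 I hI
  refine ⟨fun z hz => ?_, fun z hz l => ?_⟩
  · obtain ⟨L, hL, -⟩ := hf I hI z hz
    exact hL.differentiableAt.differentiableWithinAt
  · obtain ⟨L, hL, hLI⟩ := hf I hI z hz
    rw [fderivWithin_of_isOpen hop hz, hL.fderiv]
    have e : (Pi.single l Complex.I : Fin n → ℂ) = Complex.I • Pi.single l 1 := by
      ext j
      rcases eq_or_ne j l with rfl | hj
      · simp
      · simp [hj]
    rw [e, hLI, ← mul_assoc, QS_mul hI]
    simp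

/-- Recovering the stem from two slices. -/
noncomputable def st2 (J K a b : ℍ) : ℍ := (J - K)⁻¹ * (a - b)
/-- First stem component. -/
noncomputable def st1 (J K a b : ℍ) : ℍ := a - J * st2 J K a b

theorem st_left (J K a b : ℍ) : st1 J K a b + J * st2 J K a b = a := by simp [st1]

theorem st_right {J K : ℍ} (h : J ≠ K) (a b : ℍ) : st1 J K a b + K * st2 J K a b = b := by
  have : (J - K) * st2 J K a b = a - b := by
    rw [st2, ← mul_assoc, mul_inv_cancel₀ (sub_ne_zero.2 h), one_mul]
  have e : st1 J K a b + K * st2 J K a b = a - (J - K) * st2 J K a b := by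
    rw [st1, sub_mul]; abel
  rw [e, this]; abel

theorem st_unique {J K : ℍ} (h : J ≠ K) {p q p' q' : ℍ} (h1 : p + J * q = p' + J * q')
    (h2 : p + K * q = p' + K * q') : p = p' ∧ q = q' := by
  have : (J - K) * (q - q') = 0 := by
    have e : (J - K) * (q - q') = (p + J * q) - (p' + J * q') - ((p + K * q) - (p' + K * q')) := by
      rw [sub_mul, mul_sub, mul_sub]; abel
    rw [e, h1, h2]; simp
  have hq : q = q' := by
    rcases mul_eq_zero.1 this with h' | h'
    · exact absurd (sub_eq_zero.1 h') h
    · exact sub_eq_zero.1 h'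
  refine ⟨?_, hq⟩
  rw [hq] at h1
  exact add_right_cancel h1

theorem st_hol {n : ℕ} {J K : ℍ} (hJ : J ∈ QS) (hK : K ∈ QS) (hne : J ≠ K)
    {a b : (Fin n → ℂ) → ℍ} {z : Fin n → ℂ} (ha : HolAt n J a z) (hb : HolAt n K b z) :
    ∃ L1 L2 : (Fin n → ℂ) →L[ℝ] ℍ,
      HasFDerivAt (fun z => st1 J K (a z) (b z)) L1 z ∧
      HasFDerivAt (fun z => st2 J K (a z) (b z)) L2 z ∧
      ∀ v, L1 (Complex.I • v) = - L2 v ∧ L2 (Complex.I • v) = L1 v := by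
  obtain ⟨A, hA, hAI⟩ := ha
  obtain ⟨B, hB, hBI⟩ := hb
  have h2 : HasFDerivAt (fun z => st2 J K (a z) (b z)) ((J - K)⁻¹ • (A - B)) z :=
    (hA.sub hB).const_mul _
  have h1 : HasFDerivAt (fun z => st1 J K (a z) (b z)) (A - J • ((J - K)⁻¹ • (A - B))) z :=
    hA.sub (h2.const_mul J)
  refine ⟨_, _, h1, h2, fun v => ?_⟩
  have e2 : ∀ v, ((J - K)⁻¹ • (A - B)) v = st2 J K (A v) (B v) := fun v => rfl
  have e1 : ∀ v, (A - J • ((J - K)⁻¹ • (A - B))) v = st1 J K (A v) (B v) := fun v => rfl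
  rw [e1, e1, e2, e2]
  have l1 := st_left J K (A v) (B v)
  have r1 := st_right hne (A v) (B v)
  apply st_unique hne
  · rw [st_left, hAI]
    nth_rewrite 1 [← l1]
    rw [mul_add, ← mul_assoc, QS_mul hJ]
    simp [add_comm]
  · rw [st_right hne, hBI]
    nth_rewrite 1 [← r1]
    rw [mul_add, ← mul_assoc, QS_mul hK]
    simp [add_comm]

theorem PsiI_real {n : ℕ} (I J : ℍ) {z : Fin n → ℂ} (hz : ∀ l, (z l).im = 0) :
    PsiI n I z = PsiI n J z := by
  funext l; simp [PsiI, hz]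

theorem PsiI_conj {n : ℕ} (I : ℍ) (z : Fin n → ℂ) :
    PsiI n (-I) (fun l => starRingEnd ℂ (z l)) = PsiI n I z := by
  funext l; simp [PsiI]

theorem PsiI_neg {n : ℕ} (I : ℍ) (z : Fin n → ℂ) :
    PsiI n I (fun l => starRingEnd ℂ (z l)) = PsiI n (-I) z := by
  funext l; simp [PsiI]

theorem PsiI_im {n : ℕ} {I : ℍ} (hI : I ∈ QS) (z : Fin n → ℂ) (l : Fin n) :
    Quaternion.im (PsiI n I z l) = (z l).im • I := by
  have := QS_re hI
  ext <;> simp [PsiI, this]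

theorem PsiI_re {n : ℕ} {I : ℍ} (hI : I ∈ QS) (z : Fin n → ℂ) (l : Fin n) :
    (PsiI n I z l).re = (z l).re := by
  have := QS_re hI
  simp [PsiI, this]

theorem QS_ne {I : ℍ} (hI : I ∈ QS) : I ≠ 0 := by
  rintro rfl
  simpa using QS_norm hI

theorem PsiI_inj {n : ℕ} {I : ℍ} (hI : I ∈ QS) {z w : Fin n → ℂ}
    (h : PsiI n I z = PsiI n I w) : z = w := by
  funext l
  have h' := congrFun h l
  apply Complex.ext
  · rw [← PsiI_re hI, ← PsiI_re hI, h']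
  · have := congrArg Quaternion.im h'
    rw [PsiI_im hI, PsiI_im hI] at this
    exact smul_left_injective ℝ (QS_ne hI) this

/-- Slice regular functions are path-slice. -/
theorem pathSlice_of_regular {n : ℕ} {Ω : Set (Fin n → ℍ)} (hΩ : sliceOpen n Ω)
    {g : (Fin n → ℍ) → ℍ} (hg : SliceRegular n Ω g) : ∃ F, isStemOf n Ω g F := by
  have main : ∀ γ : ℝ → Fin n → ℂ, ∃ p : ℍ × ℍ, γ ∈ PathsIn n Ω → ∀ I ∈ sliceUnits n Ω γ,
      g (PsiI n I (γ 1)) = p.1 + I * p.2 := by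
    intro γ
    by_cases hγ : γ ∈ PathsIn n Ω
    swap
    · exact ⟨0, fun h => absurd h hγ⟩
    by_cases hnt : (sliceUnits n Ω γ).Nontrivial
    · obtain ⟨J, hJ, K, hK, hne⟩ := hnt
      let a : (Fin n → ℂ) → ℍ := fun z => g (PsiI n J z)
      let b : (Fin n → ℂ) → ℍ := fun z => g (PsiI n K z)
      refine ⟨(st1 J K (a (γ 1)) (b (γ 1)), st2 J K (a (γ 1)) (b (γ 1))), fun _ I hI => ?_⟩
      let U := PsiI n I ⁻¹' Ω ∩ (PsiI n J ⁻¹' Ω ∩ PsiI n K ⁻¹' Ω)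
      have hU : IsOpen U := (hΩ.2 I hI.1).inter ((hΩ.2 J hJ.1).inter (hΩ.2 K hK.1))
      have := ident_path hI.1
        (fun z => g (PsiI n I z) - (st1 J K (a z) (b z) + I * st2 J K (a z) (b z))) U hU
        ?_ ?_ γ hγ.1 (fun t ht => ⟨hI.2 t ht, hJ.2 t ht, hK.2 t ht⟩)
      · exact sub_eq_zero.1 this
      · rintro z ⟨hzI, hzJ, hzK⟩
        obtain ⟨L, hL, hLI⟩ := sliceRegular_holAt hΩ hg hI.1 hzI
        obtain ⟨L1, L2, h1, h2, hv⟩ := st_hol hJ.1 hK.1 hne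
          (sliceRegular_holAt hΩ hg hJ.1 hzJ) (sliceRegular_holAt hΩ hg hK.1 hzK)
        refine ⟨_, hL.sub (h1.add (h2.const_mul I)), fun v => ?_⟩
        have e : ∀ v, (L - (L1 + I • L2)) v = L v - (L1 v + I * L2 v) := fun v => rfl
        rw [e, e, hLI, (hv v).1, (hv v).2, mul_sub, mul_add, ← mul_assoc, QS_mul hI.1]
        simp [add_comm]
      · rintro z - hz
        have e1 : a z = g (PsiI n I z) := by simp only [a]; rw [PsiI_real J I hz]
        have e2 : b z = g (PsiI n I z) := by simp only [b]; rw [PsiI_real K I hz]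
        simp [e1, e2, st1, st2]
    · obtain ⟨I, hI⟩ := hγ.2
      refine ⟨(g (PsiI n I (γ 1)), 0), fun _ J hJ => ?_⟩
      have : J = I := (Set.not_nontrivial_iff.1 hnt) hJ hI
      simp [this]
  choose F hF using main
  exact ⟨F, hF⟩

theorem stemF_isStem {n : ℕ} {Ω : Set (Fin n → ℍ)} (hΩ : sliceOpen n Ω)
    {g : (Fin n → ℍ) → ℍ} (hg : SliceRegular n Ω g) : isStemOf n Ω g (stemF n Ω g) := by
  have h := pathSlice_of_regular hΩ hg
  rw [stemF, dif_pos h]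
  exact h.choose_spec

theorem glue_cont {n : ℕ} {α δ : ℝ → Fin n → ℂ} (hα : ContinuousOn α (Set.Icc 0 1))
    (hδ : ContinuousOn δ (Set.Icc 0 1)) (h : α 1 = δ 0) :
    ContinuousOn (concatP n α δ) (Set.Icc 0 1) := by
  have h1 : ContinuousOn (fun t : ℝ => Set.IccExtend (zero_le_one' ℝ) (Set.domRestrict (Set.Icc (0:ℝ) 1) α) (2 * t)) Set.univ := by
    exact (((continuousOn_iff_continuous_domRestrict.1 hα).Icc_extend').comp (by fun_prop)).continuousOn
  have h2 : ContinuousOn (fun t : ℝ => Set.IccExtend (zero_le_one' ℝ) (Set.domRestrict (Set.Icc (0:ℝ) 1) δ) (2 * t - 1)) Set.univ := by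
    exact (((continuousOn_iff_continuous_domRestrict.1 hδ).Icc_extend').comp (by fun_prop)).continuousOn
  have h3 : Continuous (fun t : ℝ => if t ≤ 1 / 2 then
      Set.IccExtend (zero_le_one' ℝ) (Set.domRestrict (Set.Icc (0:ℝ) 1) α) (2 * t) else
      Set.IccExtend (zero_le_one' ℝ) (Set.domRestrict (Set.Icc (0:ℝ) 1) δ) (2 * t - 1)) := by
    refine Continuous.if_le (continuousOn_univ.1 h1) (continuousOn_univ.1 h2) continuous_id
      continuous_const ?_
    rintro t rfl
    rw [Set.IccExtend_of_mem _ _ (by norm_num), Set.IccExtend_of_mem _ _ (by norm_num)]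
    simp
    exact h
  refine h3.continuousOn.congr fun t ht => ?_
  simp only [concatP]
  split_ifs with hc
  · rw [Set.IccExtend_of_mem _ _ ⟨by linarith [ht.1], by linarith⟩]; rfl
  · rw [Set.IccExtend_of_mem _ _ ⟨by linarith [ht.1], by linarith [ht.2]⟩]; rfl

theorem glue_mem {n : ℕ} {α δ : ℝ → Fin n → ℂ} {P : (Fin n → ℂ) → Prop}
    (hα : ∀ t ∈ Set.Icc (0 : ℝ) 1, P (α t)) (hδ : ∀ t ∈ Set.Icc (0 : ℝ) 1, P (δ t)) :
    ∀ t ∈ Set.Icc (0 : ℝ) 1, P (concatP n α δ t) := by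
  intro t ht
  simp only [concatP]
  split_ifs with hc
  · exact hα _ ⟨by linarith [ht.1], by linarith⟩
  · exact hδ _ ⟨by linarith [ht.1], by linarith [ht.2]⟩

theorem glue_left {n : ℕ} {α δ : ℝ → Fin n → ℂ} {P : (Fin n → ℂ) → Prop}
    (h : ∀ t ∈ Set.Icc (0 : ℝ) 1, P (concatP n α δ t)) : ∀ t ∈ Set.Icc (0 : ℝ) 1, P (α t) := by
  intro t ht
  have := h (t / 2) ⟨by linarith [ht.1], by linarith [ht.2]⟩
  rw [concatP, if_pos (by linarith [ht.2])] at this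
  rwa [show 2 * (t / 2) = t by ring] at this

theorem glue_right {n : ℕ} {α δ : ℝ → Fin n → ℂ} {P : (Fin n → ℂ) → Prop} (he : α 1 = δ 0)
    (h : ∀ t ∈ Set.Icc (0 : ℝ) 1, P (concatP n α δ t)) : ∀ t ∈ Set.Icc (0 : ℝ) 1, P (δ t) := by
  intro t ht
  rcases eq_or_lt_of_le ht.1 with h0 | h0
  · subst h0
    rw [← he]
    exact glue_left h 1 (by simp)
  have := h ((t + 1) / 2) ⟨by linarith [ht.1], by linarith [ht.2]⟩
  rw [concatP, if_neg (by linarith)] at this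
  rwa [show 2 * ((t + 1) / 2) - 1 = t by ring] at this

/-- Two paths in one slice of `Ω₁` with common end point have the same stem value. -/
theorem stem_eq {n : ℕ} {Ω₁ Ω₂ : Set (Fin n → ℍ)} (hsp : stemPreserving n Ω₁ Ω₂)
    {g : (Fin n → ℍ) → ℍ} {F : (ℝ → Fin n → ℂ) → ℍ × ℍ} (hF : isStemOf n Ω₂ g F)
    {I : ℍ} (hI : I ∈ QS) {α β : ℝ → Fin n → ℂ} (hα : α ∈ PathsC n) (hβ : β ∈ PathsC n)
    (hαI : pathInSlice n Ω₁ I α) (hβI : pathInSlice n Ω₁ I β) (h1 : α 1 = β 1) :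
    F α = F β := by
  let δ : ℝ → Fin n → ℂ := fun t => β (1 - t)
  have hflip : ∀ t ∈ Set.Icc (0 : ℝ) 1, 1 - t ∈ Set.Icc (0 : ℝ) 1 := fun t ht =>
    ⟨by linarith [ht.2], by linarith [ht.1]⟩
  have hδ : ContinuousOn δ (Set.Icc 0 1) := hβ.1.comp (by fun_prop) hflip
  have he : α 1 = δ 0 := by simp [δ, h1]
  have hc : concatP n α δ ∈ PathsIn n Ω₁ := by
    refine ⟨⟨glue_cont hα.1 hδ he, ?_⟩, I, hI, ?_⟩
    · intro l
      simpa [concatP] using hα.2 l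
    · exact glue_mem (P := fun z => PsiI n I z ∈ Ω₁) hαI (fun t ht => hβI _ (hflip t ht))
  obtain ⟨J, hJ, K, hK, hne⟩ := hsp.1 _ hc
  have left : ∀ J ∈ sliceUnits n Ω₂ (concatP n α δ), J ∈ sliceUnits n Ω₂ α := fun J hJ =>
    ⟨hJ.1, glue_left (P := fun z => PsiI n J z ∈ Ω₂) hJ.2⟩
  have right : ∀ J ∈ sliceUnits n Ω₂ (concatP n α δ), J ∈ sliceUnits n Ω₂ β := fun J hJ =>
    ⟨hJ.1, fun t ht => by
      have := glue_right (P := fun z => PsiI n J z ∈ Ω₂) he hJ.2 (1 - t) (hflip t ht)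
      simpa [δ] using this⟩
  have hA : α ∈ PathsIn n Ω₂ := ⟨hα, J, left J hJ⟩
  have hB : β ∈ PathsIn n Ω₂ := ⟨hβ, J, right J hJ⟩
  have key : ∀ J ∈ sliceUnits n Ω₂ (concatP n α δ),
      (F α).1 + J * (F α).2 = (F β).1 + J * (F β).2 := by
    intro J hJ
    rw [← hF α hA J (left J hJ), ← hF β hB J (right J hJ), h1]
  obtain ⟨e1, e2⟩ := st_unique hne (key J hJ) (key K hK)
  exact Prod.ext e1 e2

theorem conjPath_mem {n : ℕ} {γ : ℝ → Fin n → ℂ} (hγ : γ ∈ PathsC n) : conjPath n γ ∈ PathsC n := by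
  refine ⟨?_, fun l => by simp [conjPath, hγ.2 l]⟩
  have : Continuous (fun z : Fin n → ℂ => fun l => starRingEnd ℂ (z l)) := by fun_prop
  exact this.comp_continuousOn hγ.1

theorem conjPath_slice {n : ℕ} {Ω : Set (Fin n → ℍ)} {I : ℍ} {γ : ℝ → Fin n → ℂ}
    (h : pathInSlice n Ω I γ) : pathInSlice n Ω (-I) (conjPath n γ) := by
  intro t ht
  have : PsiI n (-I) (conjPath n γ t) = PsiI n I (γ t) := PsiI_conj I (γ t)
  rw [this]; exact h t ht

theorem stem_conj {n : ℕ} {Ω₁ Ω₂ : Set (Fin n → ℍ)} (hsp : stemPreserving n Ω₁ Ω₂)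
    {g : (Fin n → ℍ) → ℍ} {F : (ℝ → Fin n → ℂ) → ℍ × ℍ} (hF : isStemOf n Ω₂ g F)
    {α : ℝ → Fin n → ℂ} (hα : α ∈ PathsIn n Ω₁) :
    (F (conjPath n α)).1 = (F α).1 ∧ (F (conjPath n α)).2 = -(F α).2 := by
  obtain ⟨J, hJ, K, hK, hne⟩ := hsp.1 _ hα
  have cj : ∀ J ∈ sliceUnits n Ω₂ α, -J ∈ sliceUnits n Ω₂ (conjPath n α) := fun J hJ =>
    ⟨QS_neg hJ.1, conjPath_slice hJ.2⟩
  have hA : α ∈ PathsIn n Ω₂ := ⟨hα.1, J, hJ⟩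
  have hB : conjPath n α ∈ PathsIn n Ω₂ := ⟨conjPath_mem hα.1, _, cj J hJ⟩
  have key : ∀ J ∈ sliceUnits n Ω₂ α,
      (F (conjPath n α)).1 + J * (-(F (conjPath n α)).2) = (F α).1 + J * (F α).2 := by
    intro J hJ
    have h1 := hF _ hB _ (cj J hJ)
    have : PsiI n (-J) (conjPath n α 1) = PsiI n J (α 1) := PsiI_conj J (α 1)
    rw [this, hF _ hA _ hJ] at h1
    rw [h1]; simp
  obtain ⟨e1, e2⟩ := st_unique hne (key J hJ) (key K hK)
  exact ⟨e1, by rw [← e2, neg_neg]⟩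

theorem scrI_real {n : ℕ} {q : Fin n → ℍ} (h : ∀ l, Quaternion.im (q l) = 0) : scrI q = 0 := by
  rw [scrI, dif_neg]
  simp [h]

theorem scrI_cases {n : ℕ} {I : ℍ} (hI : I ∈ QS) {z : Fin n → ℂ} (h : ∃ l, (z l).im ≠ 0) :
    scrI (PsiI n I z) = I ∨ scrI (PsiI n I z) = -I := by
  classical
  have hne := QS_ne hI
  have hq : ∀ l, Quaternion.im (PsiI n I z l) ≠ 0 ↔ (z l).im ≠ 0 := by
    intro l
    rw [PsiI_im hI]; simp [hne]
  obtain ⟨l, hl⟩ := h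
  have hnon : (Finset.univ.filter fun l : Fin n => Quaternion.im (PsiI n I z l) ≠ 0).Nonempty :=
    ⟨l, by simpa using (hq l).2 hl⟩
  rw [scrI, dif_pos (by convert hnon)]
  have hm := Finset.min'_mem _ hnon
  rw [Finset.mem_filter] at hm
  have hm2 := (hq _).1 hm.2
  have gen : ∀ m : Fin n, (z m).im ≠ 0 →
      ‖Quaternion.im (PsiI n I z m)‖⁻¹ • Quaternion.im (PsiI n I z m) = I ∨
      ‖Quaternion.im (PsiI n I z m)‖⁻¹ • Quaternion.im (PsiI n I z m) = -I := by
    intro m hm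
    rw [PsiI_im hI, norm_smul, QS_norm hI, mul_one, smul_smul, Real.norm_eq_abs]
    rcases lt_or_gt_of_ne hm with h | h
    · right
      rw [abs_of_neg h, inv_neg, neg_mul, inv_mul_cancel₀ hm, neg_smul, one_smul]
    · left
      rw [abs_of_pos h, inv_mul_cancel₀ hm, one_smul]
  convert gen _ hm2

/-- Value of the star product through any path in the slice. -/
theorem starProd_eq {n : ℕ} {Ω₁ Ω₂ : Set (Fin n → ℍ)} (hsp : stemPreserving n Ω₁ Ω₂)
    {f g : (Fin n → ℍ) → ℍ} (hF : isStemOf n Ω₂ g (stemF n Ω₂ g))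
    {I : ℍ} (hI : I ∈ QS) {α : ℝ → Fin n → ℂ} (hα : α ∈ PathsC n)
    (hαI : pathInSlice n Ω₁ I α) :
    starProd n Ω₁ Ω₂ f g (PsiI n I (α 1)) =
      f (PsiI n I (α 1)) * (stemF n Ω₂ g α).1 + I * f (PsiI n I (α 1)) * (stemF n Ω₂ g α).2 := by
  have hα1 : α ∈ PathsIn n Ω₁ := ⟨hα, I, hI, hαI⟩
  by_cases hreal : ∀ l, (α 1 l).im = 0
  · have him : ∀ l, Quaternion.im (PsiI n I (α 1) l) = 0 := fun l => by
      rw [PsiI_im hI, hreal]; simp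
    rw [starProd, scrI_real him, scrF, dif_neg (by simp [him])]
    obtain ⟨J, hJ, K, hK, hne⟩ := hsp.1 _ hα1
    have hA : α ∈ PathsIn n Ω₂ := ⟨hα, J, hJ⟩
    have key : ∀ J ∈ sliceUnits n Ω₂ α, (stemF n Ω₂ g α).1 + J * (stemF n Ω₂ g α).2
        = g (PsiI n I (α 1)) + J * 0 := by
      intro J hJ
      rw [← hF _ hA _ hJ, PsiI_real J I hreal]; simp
    obtain ⟨e1, e2⟩ := st_unique hne (key J hJ) (key K hK)
    rw [e1, e2]; simp
  · push Not at hreal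
    have hc := scrI_cases hI hreal
    have hex : (∃ l, Quaternion.im (PsiI n I (α 1) l) ≠ 0) ∧
        ∃ γ, γ ∈ PathsIn n Ω₁ ∧ pathInSlice n Ω₁ (scrI (PsiI n I (α 1))) γ ∧
          PsiI n (scrI (PsiI n I (α 1))) (γ 1) = PsiI n I (α 1) := by
      constructor
      · obtain ⟨l, hl⟩ := hreal
        refine ⟨l, ?_⟩
        rw [PsiI_im hI]; simp [QS_ne hI, hl]
      · rcases hc with hc | hc <;> rw [hc]
        · exact ⟨α, hα1, hαI, rfl⟩
        · exact ⟨conjPath n α, ⟨conjPath_mem hα, -I, QS_neg hI, conjPath_slice hαI⟩,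
            conjPath_slice hαI, PsiI_conj I (α 1)⟩
    rw [starProd, scrF, dif_pos hex]
    obtain ⟨h1, h2, h3⟩ := hex.2.choose_spec
    generalize hex.2.choose = β at h1 h2 h3
    rcases hc with hc | hc <;> rw [hc] at h2 h3 ⊢
    · rw [stem_eq hsp hF hI h1.1 hα h2 hαI (PsiI_inj hI h3)]
    · have h4 := conjPath_slice h2
      rw [neg_neg] at h4
      have h5 : conjPath n β 1 = α 1 := by
        apply PsiI_inj hI
        rw [← h3]
        exact PsiI_neg I (β 1)
      have h6 := stem_eq hsp hF hI (conjPath_mem h1.1) hα h4 hαI h5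
      obtain ⟨e1, e2⟩ := stem_conj hsp hF h1
      rw [h6] at e1 e2
      rw [e1, e2]; simp

/-- Every point of a slice of `Ω₁` is reached by a path in this slice. -/
theorem exists_path {n : ℕ} {Ω : Set (Fin n → ℍ)} (hrc : realPathConnected n Ω)
    {I : ℍ} (hI : I ∈ QS) {z : Fin n → ℂ} (hz : PsiI n I z ∈ Ω) :
    ∃ α ∈ PathsC n, pathInSlice n Ω I α ∧ α 1 = z := by
  by_cases hreal : ∀ l, (z l).im = 0
  · exact ⟨fun _ => z, ⟨continuousOn_const, hreal⟩, fun _ _ => hz, rfl⟩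
  push Not at hreal
  obtain ⟨l, hl⟩ := hreal
  obtain ⟨γ, hγ, J, ⟨hJ, hJγ⟩, he⟩ := hrc _ hz
  have hl2 := congrArg Quaternion.im (congrFun he l)
  rw [PsiI_im hI, PsiI_im hJ] at hl2
  have hJI : J = I ∨ J = -I := by
    have hn := congrArg norm hl2
    rw [norm_smul, norm_smul, QS_norm hI, QS_norm hJ, mul_one, mul_one, Real.norm_eq_abs,
      Real.norm_eq_abs, abs_eq_abs] at hn
    rcases hn with hn | hn <;> rw [hn] at hl2
    · exact Or.inl (smul_right_injective _ hl hl2)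
    · right
      rw [neg_smul, ← smul_neg] at hl2
      have : -J = I := smul_right_injective _ hl hl2
      rw [← this, neg_neg]
  rcases hJI with rfl | rfl
  · exact ⟨γ, hγ.1, hJγ, PsiI_inj hI he⟩
  · have h4 := conjPath_slice hJγ
    rw [neg_neg] at h4
    refine ⟨conjPath n γ, conjPath_mem hγ.1, h4, PsiI_inj hI ?_⟩
    rw [← he]
    exact PsiI_neg I (γ 1)

theorem segPath_ball {n : ℕ} {c w : Fin n → ℂ} {r : ℝ} (hw : w ∈ Metric.ball c r) :
    ∀ t ∈ Set.Icc (0 : ℝ) 1, segPath n c w t ∈ Metric.ball c r := by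
  intro t ht
  have hr : 0 < r := lt_of_le_of_lt dist_nonneg hw
  exact convex_ball c r (Metric.mem_ball_self hr) hw (by linarith [ht.2]) ht.1 (by ring)

theorem extend_mem {n : ℕ} {γ : ℝ → Fin n → ℂ} (hγ : γ ∈ PathsC n) (w : Fin n → ℂ) :
    extendPath n γ w ∈ PathsC n := by
  refine ⟨glue_cont hγ.1 ?_ (by simp [segPath]), fun l => ?_⟩
  · apply Continuous.continuousOn
    unfold segPath
    fun_prop
  · simpa [extendPath, concatP] using hγ.2 l

theorem extend_one {n : ℕ} (γ : ℝ → Fin n → ℂ) (w : Fin n → ℂ) : extendPath n γ w 1 = w := by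
  simp only [extendPath, concatP, segPath]
  norm_num

theorem extend_slice {n : ℕ} {Ω : Set (Fin n → ℍ)} {I : ℍ} {γ : ℝ → Fin n → ℂ} {r : ℝ}
    (hγ : pathInSlice n Ω I γ) (hb : Metric.ball (γ 1) r ⊆ PsiI n I ⁻¹' Ω) {w : Fin n → ℂ}
    (hw : w ∈ Metric.ball (γ 1) r) : pathInSlice n Ω I (extendPath n γ w) :=
  glue_mem (P := fun z => PsiI n I z ∈ Ω) hγ (fun t ht => hb (segPath_ball hw t ht))

theorem statement7 (n : ℕ) (hn : 1 ≤ n) (Ω₁ Ω₂ : Set (Fin n → ℍ))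
    (hΩ₁ : sliceOpen n Ω₁) (hrc : realPathConnected n Ω₁)
    (hΩ₂ : sliceOpen n Ω₂) (hsp : stemPreserving n Ω₁ Ω₂)
    (f g : (Fin n → ℍ) → ℍ) (hf : SliceRegular n Ω₁ f) (hg : SliceRegular n Ω₂ g) :
    SliceRegular n Ω₁ (starProd n Ω₁ Ω₂ f g) := by
  have hF := stemF_isStem hΩ₂ hg
  apply sliceRegular_of_holAt hΩ₁
  intro I hI z hz
  obtain ⟨α, hα, hαI, rfl⟩ := exists_path hrc hI hz
  obtain ⟨J, hJ, K, hK, hne⟩ := hsp.1 α ⟨hα, I, hI, hαI⟩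
  have h11 : (1 : ℝ) ∈ Set.Icc (0 : ℝ) 1 := by simp
  have hJ1 := hJ.2 1 h11
  have hK1 := hK.2 1 h11
  let U := PsiI n I ⁻¹' Ω₁ ∩ (PsiI n J ⁻¹' Ω₂ ∩ PsiI n K ⁻¹' Ω₂)
  have hU : IsOpen U := (hΩ₁.2 I hI).inter ((hΩ₂.2 J hJ.1).inter (hΩ₂.2 K hK.1))
  obtain ⟨r, hr, hb⟩ := Metric.isOpen_iff.1 hU (α 1) ⟨hz, hJ1, hK1⟩
  obtain ⟨L, hL, hLI⟩ := sliceRegular_holAt hΩ₁ hf hI hz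
  obtain ⟨L1, L2, h1, h2, hv⟩ := st_hol hJ.1 hK.1 hne
    (sliceRegular_holAt hΩ₂ hg hJ.1 hJ1) (sliceRegular_holAt hΩ₂ hg hK.1 hK1)
  have hprod := (hL.mul' h1).add ((hL.const_mul I).mul' h2)
  refine ⟨_, hprod.congr_of_eventuallyEq ?_, fun v => ?_⟩
  · filter_upwards [Metric.ball_mem_nhds _ hr] with w hw
    have hβ := extend_mem hα w
    have hβI := extend_slice hαI (fun z hz => (hb hz).1) hw
    have hβJ : J ∈ sliceUnits n Ω₂ (extendPath n α w) :=
      ⟨hJ.1, extend_slice hJ.2 (fun z hz => (hb hz).2.1) hw⟩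
    have hβK : K ∈ sliceUnits n Ω₂ (extendPath n α w) :=
      ⟨hK.1, extend_slice hK.2 (fun z hz => (hb hz).2.2) hw⟩
    have hB : extendPath n α w ∈ PathsIn n Ω₂ := ⟨hβ, J, hβJ⟩
    have e := starProd_eq (f := f) hsp hF hI hβ hβI
    have eJ := hF _ hB _ hβJ
    have eK := hF _ hB _ hβK
    rw [extend_one] at e eJ eK
    obtain ⟨e1, e2⟩ := st_unique hne
      (eJ.symm.trans (st_left J K (g (PsiI n J w)) (g (PsiI n K w))).symm)
      (eK.symm.trans (st_right hne (g (PsiI n J w)) (g (PsiI n K w))).symm)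
    rw [e, e1, e2]
    rfl
  · simp only [ContinuousLinearMap.add_apply, ContinuousLinearMap.smul_apply, hLI, (hv v).1,
      (hv v).2, smul_eq_mul, MulOpposite.smul_eq_mul_unop, MulOpposite.unop_op, mul_add,
      ← mul_assoc, QS_mul hI]
    simp only [mul_neg, neg_mul, one_mul]
    abel
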